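/- arXiv:2510.25571 — 2 statements merged into one kernel-verified Lean document; each statement's English description precedes it below -/
import Mathlib

section
/- For all real numbers a, b, c, T with 0 < a ≤ T, 0 < b ≤ T, 0 < c ≤ T, one has ∫_{−T}^{T} 1/√((t² + a²)(t² + b²)(t² + c²)) dt ≤ π/( max{a,b,c} · min{a,b,c} ). -/
/-!
The factor of the product belonging to the largest parameter `M` is at least `M ^ 2`, and the other
two are at least `t ^ 2 + m ^ 2`, where `m` is the smallest parameter. The integrand is therefore at
most `1 / (M * (t ^ 2 + m ^ 2))`, whose integral over the whole line is `π / (M * m)`.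
-/

open MeasureTheory Real

theorem inv_sq_add_sq_eq_mul_inv_one_add_div_sq {m : ℝ} (hm : m ≠ 0) (t : ℝ) :
    (t ^ 2 + m ^ 2)⁻¹ = (m ^ 2)⁻¹ * (1 + (t / m) ^ 2)⁻¹ := by
  rw [← mul_inv]
  congr 1
  field_simp
  ring

theorem integrable_inv_sq_add_sq {m : ℝ} (hm : m ≠ 0) :
    Integrable fun t : ℝ ↦ (t ^ 2 + m ^ 2)⁻¹ := by
  simp only [inv_sq_add_sq_eq_mul_inv_one_add_div_sq hm]
  exact (integrable_inv_one_add_sq.comp_div hm).const_mul _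

theorem integral_univ_inv_sq_add_sq {m : ℝ} (hm : m ≠ 0) :
    ∫ t : ℝ, (t ^ 2 + m ^ 2)⁻¹ = π / |m| := by
  simp only [inv_sq_add_sq_eq_mul_inv_one_add_div_sq hm]
  rw [integral_const_mul, Measure.integral_comp_div (fun x : ℝ ↦ (1 + x ^ 2)⁻¹),
    integral_univ_inv_one_add_sq, smul_eq_mul, ← sq_abs]
  field_simp

theorem setIntegral_inv_sq_add_sq_le {m : ℝ} (hm : m ≠ 0) (s : Set ℝ) :
    ∫ t in s, (t ^ 2 + m ^ 2)⁻¹ ≤ π / |m| :=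
  (setIntegral_le_integral (integrable_inv_sq_add_sq hm)
    (ae_of_all _ fun t ↦ by simp only [Pi.zero_apply]; positivity)).trans_eq
    (integral_univ_inv_sq_add_sq hm)

theorem mul_sq_add_sq_le_sqrt {m y z : ℝ} (hy : m ^ 2 ≤ y ^ 2) (hz : m ^ 2 ≤ z ^ 2) (x t : ℝ) :
    x * (t ^ 2 + m ^ 2) ≤ √((t ^ 2 + x ^ 2) * (t ^ 2 + y ^ 2) * (t ^ 2 + z ^ 2)) := by
  have hx : x ^ 2 ≤ t ^ 2 + x ^ 2 := le_add_of_nonneg_left (sq_nonneg t)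
  apply le_sqrt_of_sq_le
  calc (x * (t ^ 2 + m ^ 2)) ^ 2 = x ^ 2 * (t ^ 2 + m ^ 2) * (t ^ 2 + m ^ 2) := by ring
    _ ≤ (t ^ 2 + x ^ 2) * (t ^ 2 + y ^ 2) * (t ^ 2 + z ^ 2) := by gcongr

theorem max_mul_sq_add_min_sq_le_sqrt {a b c : ℝ} (ha : 0 ≤ a) (hb : 0 ≤ b) (hc : 0 ≤ c) (t : ℝ) :
    max (max a b) c * (t ^ 2 + min (min a b) c ^ 2) ≤
      √((t ^ 2 + a ^ 2) * (t ^ 2 + b ^ 2) * (t ^ 2 + c ^ 2)) := by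
  have hmin : 0 ≤ min (min a b) c := le_min (le_min ha hb) hc
  have min_sq_le {x : ℝ} (hx : min (min a b) c ≤ x) : min (min a b) c ^ 2 ≤ x ^ 2 :=
    pow_le_pow_left₀ hmin hx 2
  have hma : min (min a b) c ^ 2 ≤ a ^ 2 := min_sq_le (by simp)
  have hmb : min (min a b) c ^ 2 ≤ b ^ 2 := min_sq_le (by simp)
  have hmc : min (min a b) c ^ 2 ≤ c ^ 2 := min_sq_le (by simp)
  rw [max_mul_of_nonneg _ _ (by positivity), max_mul_of_nonneg _ _ (by positivity)]
  refine max_le (max_le ?_ ?_) ?_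
  · exact mul_sq_add_sq_le_sqrt hmb hmc a t
  · rw [mul_comm (t ^ 2 + a ^ 2)]
    exact mul_sq_add_sq_le_sqrt hma hmc b t
  · rw [mul_comm _ (t ^ 2 + c ^ 2), ← mul_assoc]
    exact mul_sq_add_sq_le_sqrt hma hmb c t

theorem integral_inv_sqrt_triple_le_general {a b c : ℝ} (ha : 0 < a) (hb : 0 < b) (hc : 0 < c)
    (s : Set ℝ) :
    ∫ t in s, 1 / √((t ^ 2 + a ^ 2) * (t ^ 2 + b ^ 2) * (t ^ 2 + c ^ 2)) ≤
      π / (max (max a b) c * min (min a b) c) := by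
  set M := max (max a b) c
  set m := min (min a b) c
  have hM : 0 < M := lt_max_of_lt_right hc
  have hm : 0 < m := lt_min (lt_min ha hb) hc
  have integrand_le (t : ℝ) : 1 / √((t ^ 2 + a ^ 2) * (t ^ 2 + b ^ 2) * (t ^ 2 + c ^ 2)) ≤
      M⁻¹ * (t ^ 2 + m ^ 2)⁻¹ := by
    rw [← mul_inv, ← one_div]
    exact one_div_le_one_div_of_le (by positivity)
      (max_mul_sq_add_min_sq_le_sqrt ha.le hb.le hc.le t)
  calc ∫ t in s, 1 / √((t ^ 2 + a ^ 2) * (t ^ 2 + b ^ 2) * (t ^ 2 + c ^ 2))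
      ≤ ∫ t in s, M⁻¹ * (t ^ 2 + m ^ 2)⁻¹ :=
        integral_mono_of_nonneg (ae_of_all _ fun t ↦ by simp only [Pi.zero_apply]; positivity)
          ((integrable_inv_sq_add_sq hm.ne').integrableOn.const_mul _) (ae_of_all _ integrand_le)
    _ = M⁻¹ * ∫ t in s, (t ^ 2 + m ^ 2)⁻¹ := integral_const_mul _ _
    _ ≤ M⁻¹ * (π / |m|) := by gcongr; exact setIntegral_inv_sq_add_sq_le hm.ne' s
    _ = π / (M * m) := by rw [abs_of_pos hm]; field_simp

/-- For all real `a, b, c, T` with `0 < a ≤ T`, `0 < b ≤ T`, `0 < c ≤ T`,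
`∫_{-T}^{T} 1/√((t²+a²)(t²+b²)(t²+c²)) dt ≤ π/(max{a,b,c} · min{a,b,c})`. -/
theorem integral_inv_sqrt_triple_le (a b c T : ℝ)
    (ha : 0 < a) (haT : a ≤ T) (hb : 0 < b) (hbT : b ≤ T) (hc : 0 < c) (hcT : c ≤ T) :
    (∫ t in (-T)..T, 1 / Real.sqrt ((t ^ 2 + a ^ 2) * (t ^ 2 + b ^ 2) * (t ^ 2 + c ^ 2))) ≤
      Real.pi / (max (max a b) c * min (min a b) c) := by
  rw [intervalIntegral.integral_of_le (by linarith)]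
  exact integral_inv_sqrt_triple_le_general ha hb hc _
end

section
/- Horizontal-segment estimate: let A be an n×n real symmetric matrix with eigenvalues λ_1, …, λ_n, let T > 0, and let a_0 ≤ a_1 be real numbers with a_1 − a_0 ≤ T. Then ∫_{a_0}^{a_1} 1/( √(x² + T²) · min_{1 ≤ i ≤ n} ((x − λ_i)² + T²) ) dx ≤ 1/T². -/
open Matrix

/-!
Since `√(x² + T²) ≥ T` and `(x - λᵢ)² + T² ≥ T²`, the integrand is at most `1 / T³`, and the
segment of integration has length at most `T`.
-/

lemma one_div_sqrt_mul_iInf_nonneg {ι : Sort*} (lam : ι → ℝ) (T x : ℝ) :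
    0 ≤ 1 / (√(x ^ 2 + T ^ 2) * ⨅ i, ((x - lam i) ^ 2 + T ^ 2)) :=
  one_div_nonneg.2 <| mul_nonneg (Real.sqrt_nonneg _) <| Real.iInf_nonneg fun _ ↦ by positivity

section

variable {ι : Sort*} [Nonempty ι] (lam : ι → ℝ)

lemma pow_three_le_sqrt_mul_iInf (T x : ℝ) :
    T ^ 3 ≤ √(x ^ 2 + T ^ 2) * ⨅ i, ((x - lam i) ^ 2 + T ^ 2) := by
  have le_sqrt : T ≤ √(x ^ 2 + T ^ 2) :=
    Real.le_sqrt_of_sq_le (le_add_of_nonneg_left (sq_nonneg x))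
  have le_iInf : T ^ 2 ≤ ⨅ i, ((x - lam i) ^ 2 + T ^ 2) :=
    le_ciInf fun i ↦ le_add_of_nonneg_left (sq_nonneg (x - lam i))
  calc
    T ^ 3 = T * T ^ 2 := pow_succ' T 2
    _ ≤ _ := mul_le_mul le_sqrt le_iInf (sq_nonneg T) (Real.sqrt_nonneg _)

lemma abs_integral_one_div_sqrt_mul_iInf_le {T : ℝ} (hT : 0 < T) (a₀ a₁ : ℝ) :
    |∫ x in a₀..a₁, 1 / (√(x ^ 2 + T ^ 2) * ⨅ i, ((x - lam i) ^ 2 + T ^ 2))| ≤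
      1 / T ^ 3 * |a₁ - a₀| := by
  rw [← Real.norm_eq_abs]
  refine intervalIntegral.norm_integral_le_of_norm_le_const fun x _ ↦ ?_
  rw [Real.norm_of_nonneg (one_div_sqrt_mul_iInf_nonneg lam T x)]
  exact one_div_le_one_div_of_le (pow_pos hT 3) (pow_three_le_sqrt_mul_iInf lam T x)

theorem horizontal_segment_estimate_general {T a₀ a₁ : ℝ} (hT : 0 < T)
    (hlen : a₁ - a₀ ≤ T) :
    ∫ x in a₀..a₁, 1 / (√(x ^ 2 + T ^ 2) * ⨅ i, ((x - lam i) ^ 2 + T ^ 2)) ≤ 1 / T ^ 2 := by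
  rcases le_total a₀ a₁ with h | h
  · calc
      _ ≤ 1 / T ^ 3 * |a₁ - a₀| :=
        (le_abs_self _).trans (abs_integral_one_div_sqrt_mul_iInf_le lam hT a₀ a₁)
      _ ≤ 1 / T ^ 3 * T := by
        rw [abs_of_nonneg (sub_nonneg.2 h)]
        gcongr
      _ = 1 / T ^ 2 := by field_simp
  · rw [intervalIntegral.integral_symm]
    have integral_nonneg := intervalIntegral.integral_nonneg (μ := MeasureTheory.volume) h
      fun x _ ↦ one_div_sqrt_mul_iInf_nonneg lam T x
    exact (neg_nonpos.2 integral_nonneg).trans (by positivity)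

end

/-- **Horizontal-segment estimate** (Lemma 5.5 / `N₂`, `N₄` bound).
For eigenvalues `λ_1, …, λ_n` of a real symmetric matrix, `T > 0` and
`a₀ ≤ a₁` with `a₁ − a₀ ≤ T`, one has
`∫_{a₀}^{a₁} 1/(√(x²+T²) · minᵢ((x−λᵢ)²+T²)) dx ≤ 1/T²`. -/
theorem horizontal_segment_estimate {n : ℕ} (hn : 1 ≤ n)
    (A : Matrix (Fin n) (Fin n) ℝ) (hA : A.IsSymm)
    (lam : Fin n → ℝ) (u : Fin n → Fin n → ℝ)
    (huortho : ∀ i j, u i ⬝ᵥ u j = if i = j then (1 : ℝ) else 0)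
    (hdecomp : A = ∑ i, lam i • Matrix.vecMulVec (u i) (u i))
    (T a0 a1 : ℝ) (hT : 0 < T) (ha : a0 ≤ a1) (hlen : a1 - a0 ≤ T) :
    (∫ x in a0..a1,
      1 / (Real.sqrt (x ^ 2 + T ^ 2) * ⨅ i : Fin n, ((x - lam i) ^ 2 + T ^ 2))) ≤
      1 / T ^ 2 := by
  have : Nonempty (Fin n) := ⟨⟨0, hn⟩⟩
  exact horizontal_segment_estimate_general lam hT hlen
end
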